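/- Let n ≥ 1, N ≥ 1, and let ρ : GL_n(ℂ) → GL_N(ℂ) be a group homomorphism such that: (a) each matrix entry of ρ(g) is given by a fixed polynomial in the n² entries of g and in det(g)^{−1} (ρ is a morphism of varieties); (b) there exist positive integers w₁,…,w_N with ρ(z·1_n) = diag(z^{w₁},…,z^{w_N}) for all z ∈ ℂˣ. Let w₀ ∈ ℂ^N be nonzero and suppose ρ(SL_n(ℂ))·w₀ is Zariski closed in ℂ^N. Then every point k lying in the Zariski closure of the orbit ρ(GL_n(ℂ))·w₀ but not in ρ(GL_n(ℂ))·w₀ itself is SL_n(ℂ)-unstable, i.e. the origin 0 ∈ ℂ^N lies in the Zariski closure of ρ(SL_n(ℂ))·k. -/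

import Mathlib

/-- A subset of `ℂ^N` is Zariski closed if it is the common zero set of a family of
polynomials. -/
def IsZariskiClosed {N : ℕ} (C : Set (Fin N → ℂ)) : Prop :=
  ∃ S : Set (MvPolynomial (Fin N) ℂ),
    C = {x | ∀ p ∈ S, MvPolynomial.eval x p = 0}

open MeasureTheory

theorem diff_eval {σ : Type*} (f : σ → ℂ → ℂ) (hf : ∀ i, Differentiable ℂ (f i))
    (p : MvPolynomial σ ℂ) : Differentiable ℂ (fun s => MvPolynomial.eval (fun i => f i s) p) := by
  induction p using MvPolynomial.induction_on with
  | C a => simp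
  | add p q hp hq => simp only [map_add]; exact hp.add hq
  | mul_X p i hp => simp only [map_mul, MvPolynomial.eval_X]; exact hp.mul (hf i)

theorem cont_eval {σ X : Type*} [TopologicalSpace X] (f : σ → X → ℂ) (hf : ∀ i, Continuous (f i))
    (p : MvPolynomial σ ℂ) : Continuous (fun s => MvPolynomial.eval (fun i => f i s) p) := by
  induction p using MvPolynomial.induction_on with
  | C a => simpa using continuous_const
  | add p q hp hq => simp only [map_add]; exact hp.add hq
  | mul_X p i hp => simp only [map_mul, MvPolynomial.eval_X]; exact hp.mul (hf i)

theorem reynolds {G : Type*} [Group G] [TopologicalSpace G] [IsTopologicalGroup G] [CompactSpace G]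
    {N : ℕ} (τ : G →* Matrix (Fin N) (Fin N) ℂ) (hτ : ∀ i j, Continuous fun u => τ u i j)
    (p : MvPolynomial (Fin N) ℂ) :
    ∃ q : MvPolynomial (Fin N) ℂ,
      (∀ x, (∀ u, MvPolynomial.eval ((τ u).mulVec x) p = 0) → MvPolynomial.eval x q = 0) ∧
      MvPolynomial.eval 0 q = MvPolynomial.eval 0 p ∧
      ∀ u x, MvPolynomial.eval ((τ u).mulVec x) q = MvPolynomial.eval x q := by
  borelize G
  let K : TopologicalSpace.PositiveCompacts G := ⊤
  let μ : Measure G := Measure.haarMeasure K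
  have hμ1 : μ Set.univ = 1 := Measure.haarMeasure_self (K₀ := K)
  have : IsProbabilityMeasure μ := ⟨hμ1⟩
  have hint : ∀ a : C(G, ℂ), Integrable (fun u => a u) μ := fun a =>
    a.continuous.integrable_of_hasCompactSupport (HasCompactSupport.of_compactSpace _)
  let T : Fin N → Fin N → C(G, ℂ) := fun i j => ⟨fun u => τ u⁻¹ i j, (hτ i j).comp continuous_inv⟩
  let Q : MvPolynomial (Fin N) C(G, ℂ) :=
    MvPolynomial.aeval (fun i => ∑ j, MvPolynomial.C (T i j) * MvPolynomial.X j) p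
  have hQ : ∀ (u : G) (x : Fin N → ℂ), MvPolynomial.eval ((τ u⁻¹).mulVec x) p =
      ∑ m ∈ Q.support, (Q.coeff m) u * ∏ i, x i ^ m i := by
    intro u x
    let ev : C(G, ℂ) →ₐ[ℂ] ℂ := ContinuousMap.evalAlgHom ℂ ℂ u
    have h1 : MvPolynomial.eval₂ (ev : C(G, ℂ) →+* ℂ) x Q =
        MvPolynomial.eval ((τ u⁻¹).mulVec x) p := by
      simp only [Q]
      induction p using MvPolynomial.induction_on with
      | C a => simp [MvPolynomial.algebraMap_eq, IsScalarTower.algebraMap_apply ℂ C(G, ℂ) (MvPolynomial (Fin N) C(G, ℂ)), ev]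
      | add p q hp hq => simp only [map_add, MvPolynomial.eval₂_add, hp, hq]
      | mul_X p i hp =>
        simp only [map_mul, MvPolynomial.eval₂_mul, hp, MvPolynomial.aeval_X,
          MvPolynomial.eval_X, MvPolynomial.eval₂_sum, MvPolynomial.eval₂_C, MvPolynomial.eval₂_X]
        rfl
    rw [← h1, MvPolynomial.eval₂_eq']
    rfl
  have hq : ∀ x, MvPolynomial.eval x (∑ m ∈ Q.support, MvPolynomial.monomial m (∫ u, Q.coeff m u ∂μ))
      = ∫ u, MvPolynomial.eval ((τ u⁻¹).mulVec x) p ∂μ := by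
    intro x
    simp_rw [hQ]
    rw [integral_finsetSum _ (fun m _ => (hint _).mul_const _), map_sum]
    refine Finset.sum_congr rfl fun m _ => ?_
    rw [integral_mul_const, MvPolynomial.eval_monomial, Finsupp.prod_fintype _ _ (by simp)]
  refine ⟨∑ m ∈ Q.support, MvPolynomial.monomial m (∫ u, Q.coeff m u ∂μ), ?_, ?_, ?_⟩
  · intro x hx
    rw [hq]; simp [hx]
  · rw [hq]; simp
  · intro v x
    rw [hq, hq, ← integral_mul_left_eq_self (μ := μ)
      (fun u => MvPolynomial.eval ((τ u⁻¹).mulVec x) p) v⁻¹]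
    refine integral_congr_ae (Filter.Eventually.of_forall fun u => ?_)
    simp [Matrix.mulVec_mulVec]

instance suTG (n : ℕ) : IsTopologicalGroup (Matrix.specialUnitaryGroup (Fin n) ℂ) where
  continuous_inv := by
    refine Continuous.subtype_mk ?_ _
    exact continuous_star.comp continuous_subtype_val

instance suCompact (n : ℕ) : CompactSpace (Matrix.specialUnitaryGroup (Fin n) ℂ) := by
  have hcl : IsClosed ((Matrix.specialUnitaryGroup (Fin n) ℂ : Submonoid _) : Set (Matrix (Fin n) (Fin n) ℂ)) := by
    have : ((Matrix.specialUnitaryGroup (Fin n) ℂ : Submonoid _) : Set (Matrix (Fin n) (Fin n) ℂ))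
      = {A | A * star A = 1} ∩ {A | A.det = 1} := by
      ext A
      simp [Matrix.mem_specialUnitaryGroup_iff, Matrix.mem_unitaryGroup_iff]
    rw [this]
    exact (isClosed_eq (by fun_prop) continuous_const).inter
      (isClosed_eq (by fun_prop) continuous_const)
  refine isCompact_iff_compactSpace.1 (?_ : IsCompact ((Matrix.specialUnitaryGroup (Fin n) ℂ : Submonoid _) : Set (Matrix (Fin n) (Fin n) ℂ)))
  have hK : IsCompact (Set.pi Set.univ fun _ : Fin n => Set.pi Set.univ fun _ : Fin n =>
      Metric.closedBall (0 : ℂ) 1) :=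
    isCompact_univ_pi fun _ => isCompact_univ_pi fun _ => isCompact_closedBall _ _
  refine IsCompact.of_isClosed_subset (X := Matrix (Fin n) (Fin n) ℂ) hK hcl ?_
  intro A hA i _ j _
  have := entry_norm_bound_of_unitary hA.1 i j
  simpa using this

open scoped ComplexOrder in
theorem su_dense {n : ℕ} (F : Matrix (Fin n) (Fin n) ℂ → ℂ)
    (hF : ∀ M : ℂ → Matrix (Fin n) (Fin n) ℂ, (∀ i j, Differentiable ℂ fun s => M s i j) →
      Differentiable ℂ fun s => F (M s))
    (h0 : ∀ A ∈ Matrix.specialUnitaryGroup (Fin n) ℂ, F A = 0)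
    (g : Matrix (Fin n) (Fin n) ℂ) (hg : g.det = 1) : F g = 0 := by
  have hpd : (g.conjTranspose * g).PosDef := by
    apply Matrix.PosDef.conjTranspose_mul_self
    exact Matrix.mulVec_injective_of_isUnit ((Matrix.isUnit_iff_isUnit_det g).2 (by simp [hg]))
  have hH := hpd.isHermitian
  set l := hH.eigenvalues with hl
  have hlpos : ∀ i, 0 < l i := hpd.eigenvalues_pos
  set V := hH.eigenvectorUnitary with hV
  have hspec := hH.spectral_theorem
  rw [Unitary.conjStarAlgAut_apply] at hspec
  have hVV : star (V : Matrix (Fin n) (Fin n) ℂ) * V = 1 := by simp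
  have hVV' : (V : Matrix (Fin n) (Fin n) ℂ) * star (V : Matrix (Fin n) (Fin n) ℂ) = 1 := by simp
  have hdet : ∏ i, l i = 1 := by
    have := hH.det_eq_prod_eigenvalues
    rw [Matrix.det_mul, Matrix.det_conjTranspose, hg] at this
    have h2 : ((∏ i, l i : ℝ) : ℂ) = 1 := by
      push_cast; simpa using this.symm
    exact_mod_cast h2
  have hsum : ∑ i, Real.log (l i) = 0 := by
    rw [← Real.log_prod (fun i _ => (hlpos i).ne'), hdet, Real.log_one]
  let D : ℂ → Matrix (Fin n) (Fin n) ℂ := fun s =>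
    Matrix.diagonal fun i => Complex.exp (s * (Real.log (l i) / 2 : ℝ))
  have hD : ∀ s t, D s * D t = D (s + t) := by
    intro s t
    simp [D, Matrix.diagonal_mul_diagonal, ← Complex.exp_add, add_mul]
  have hD0 : D 0 = 1 := by simp [D]
  have hDdet : ∀ s, (D s).det = 1 := by
    intro s
    simp only [D, Matrix.det_diagonal, ← Complex.exp_sum, ← Finset.mul_sum, ← Complex.ofReal_sum, ← Finset.sum_div, hsum]
    simp
  have hDstar : ∀ s, star (D s) = D (star s) := by
    intro s
    simp only [D, Matrix.star_eq_conjTranspose, Matrix.diagonal_conjTranspose]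
    congr 1
    ext i
    simp [← Complex.exp_conj, map_ofNat]
  have hD2 : g.conjTranspose * g = V * D 2 * star (V : Matrix (Fin n) (Fin n) ℂ) := by
    rw [hspec]
    congr 2
    simp only [D]
    congr 1
    ext i
    simp only [Function.comp]
    have : (2 : ℂ) * ((Real.log (l i) / 2 : ℝ) : ℂ) = ((Real.log (l i) : ℝ) : ℂ) := by push_cast; ring
    rw [this, ← Complex.ofReal_exp, Real.exp_log (hlpos i)]
    rfl
  -- path
  let M : ℂ → Matrix (Fin n) (Fin n) ℂ := fun s => g * V * D (s - 1) * star (V : Matrix (Fin n) (Fin n) ℂ)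
  have hVdet : (V : Matrix (Fin n) (Fin n) ℂ).det * (star (V : Matrix (Fin n) (Fin n) ℂ)).det = 1 := by
    rw [← Matrix.det_mul, hVV', Matrix.det_one]
  have hM1 : M 1 = g := by
    simp only [M, sub_self, hD0, mul_one]
    rw [mul_assoc, hVV', mul_one]
  have hMdet : ∀ s, (M s).det = 1 := by
    intro s
    simp only [M, Matrix.det_mul, hDdet, hg, one_mul, mul_one, hVdet]
  have hMsu : ∀ θ : ℝ, M (θ * Complex.I) ∈ Matrix.specialUnitaryGroup (Fin n) ℂ := by
    intro θ
    refine Matrix.mem_specialUnitaryGroup_iff.2 ⟨?_, hMdet _⟩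
    rw [Matrix.mem_unitaryGroup_iff']
    have e1 : star (M (θ * Complex.I)) * M (θ * Complex.I) =
      V * (star (D (θ * Complex.I - 1)) * (star (V : Matrix (Fin n) (Fin n) ℂ) * (g.conjTranspose * g) * V) * D (θ * Complex.I - 1)) * star (V : Matrix (Fin n) (Fin n) ℂ) := by
      simp only [M, star_mul, star_star, mul_assoc, Matrix.star_eq_conjTranspose g]
    have e2 : star (V : Matrix (Fin n) (Fin n) ℂ) * (g.conjTranspose * g) * V = D 2 := by
      rw [hD2]
      simp only [mul_assoc, hVV, mul_one]
      rw [← mul_assoc, hVV, one_mul]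
    rw [e1, e2, hDstar, hD, hD]
    have : star (θ * Complex.I - 1) + 2 + (θ * Complex.I - 1) = 0 := by
      simp; ring
    rw [this, hD0, mul_one, hVV']
  have hdiff : Differentiable ℂ fun s => F (M s) := by
    apply hF
    intro i j
    simp only [M, Matrix.mul_apply, D, Matrix.diagonal_apply]
    refine Differentiable.fun_sum fun a _ => Differentiable.mul (Differentiable.fun_sum fun b _ => Differentiable.mul (by fun_prop) ?_) (by fun_prop)
    split_ifs <;> fun_prop
  have han : AnalyticOnNhd ℂ (fun s => F (M s)) Set.univ :=
    fun s _ => hdiff.analyticAt s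
  have hz : AnalyticOnNhd ℂ (fun _ : ℂ => (0 : ℂ)) Set.univ := analyticOnNhd_const
  have hfreq : ∃ᶠ s in nhdsWithin (0 : ℂ) {0}ᶜ, F (M s) = 0 := by
    have ht : Filter.Tendsto (fun θ : ℝ => (θ : ℂ) * Complex.I) (nhdsWithin 0 {0}ᶜ)
        (nhdsWithin (0 : ℂ) {0}ᶜ) := by
      refine tendsto_nhdsWithin_iff.2 ⟨?_, ?_⟩
      · have : Continuous fun θ : ℝ => (θ : ℂ) * Complex.I := by fun_prop
        simpa using (this.tendsto 0).mono_left nhdsWithin_le_nhds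
      · filter_upwards [self_mem_nhdsWithin] with θ hθ
        simpa using hθ
    exact ht.frequently (Filter.Eventually.of_forall fun θ => h0 _ (hMsu θ)).frequently
  have := han.eqOn_of_preconnected_of_frequently_eq hz isPreconnected_univ (Set.mem_univ 0) hfreq (Set.mem_univ (1 : ℂ))
  simpa [hM1] using this

theorem wt_expand {N : ℕ} (w : Fin N → ℕ) (p : MvPolynomial (Fin N) ℂ) :
    ∃ (D : ℕ) (q : ℕ → MvPolynomial (Fin N) ℂ), ∀ (x : Fin N → ℂ) (z : ℂ),
      MvPolynomial.eval (fun i => z ^ w i * x i) p =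
        ∑ j ∈ Finset.range D, z ^ j * MvPolynomial.eval x (q j) := by
  let Q : Polynomial (MvPolynomial (Fin N) ℂ) :=
    MvPolynomial.aeval (fun i => Polynomial.C (MvPolynomial.X i) * Polynomial.X ^ (w i)) p
  refine ⟨Q.natDegree + 1, Q.coeff, fun x z => ?_⟩
  have h1 : Polynomial.eval₂ (MvPolynomial.eval x) z Q =
      MvPolynomial.eval (fun i => z ^ w i * x i) p := by
    simp only [Q]
    induction p using MvPolynomial.induction_on with
    | C a => 
      simp only [MvPolynomial.aeval_C, MvPolynomial.eval_C]
      rw [IsScalarTower.algebraMap_apply ℂ (MvPolynomial (Fin N) ℂ) (Polynomial (MvPolynomial (Fin N) ℂ))]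
      simp [MvPolynomial.algebraMap_eq]
    | add p q hp hq => simp only [map_add, Polynomial.eval₂_add, hp, hq]
    | mul_X p i hp =>
      simp only [map_mul, Polynomial.eval₂_mul, hp, MvPolynomial.aeval_X,
        MvPolynomial.eval_X, Polynomial.eval₂_C, Polynomial.eval₂_X_pow]
      ring
  rw [← h1, Polynomial.eval₂_eq_sum_range]
  exact Finset.sum_congr rfl fun j _ => mul_comm _ _

theorem coef_unique (D : ℕ) (a b : ℕ → ℂ)
    (h : ∀ z : ℂ, z ≠ 0 → ∑ j ∈ Finset.range D, z ^ j * a j = ∑ j ∈ Finset.range D, z ^ j * b j) :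
    ∀ j < D, a j = b j := by
  let R : Polynomial ℂ := ∑ j ∈ Finset.range D, Polynomial.C (a j - b j) * Polynomial.X ^ j
  have hR : R = 0 := by
    apply Polynomial.eq_zero_of_infinite_isRoot
    refine Set.Infinite.mono (s := {0}ᶜ) ?_ (Set.finite_singleton (0 : ℂ)).infinite_compl
    intro z hz
    have := h z hz
    simp only [Set.mem_ofPred_eq, Polynomial.IsRoot, R, Polynomial.eval_finsetSum,
      Polynomial.eval_mul, Polynomial.eval_C, Polynomial.eval_pow, Polynomial.eval_X]
    rw [← sub_eq_zero, ← Finset.sum_sub_distrib] at this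
    rw [← this]
    exact Finset.sum_congr rfl fun j _ => by ring
  intro j hj
  have := congrArg (fun r => Polynomial.coeff r j) hR
  simp only [R, Polynomial.finsetSum_coeff, Polynomial.coeff_C_mul, Polynomial.coeff_X_pow] at this
  simp [hj] at this
  exact sub_eq_zero.1 this

theorem root_lemma (d : ℕ) (hd : 0 < d) (a : ℂ) (ha : a ≠ 0) (D : ℕ) (h : ℕ → ℂ)
    (hr : ∀ t : ℂ, t ^ d = a → ∑ j ∈ Finset.range D, t ^ j * h j = 0) :
    ∑ j ∈ Finset.range D, a ^ (j / d) * h j = 0 := by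
  let R : Polynomial ℂ :=
    ∑ j ∈ Finset.range D, Polynomial.C (a ^ (j / d) * h j) * Polynomial.X ^ (j % d)
  have hprim := Complex.isPrimitiveRoot_exp d hd.ne'
  have hR : R = 0 := by
    obtain ⟨t₀, ht₀⟩ := IsAlgClosed.exists_pow_nat_eq a hd
    have hnd := hprim.nthRoots_nodup ha
    have hcard : (Polynomial.nthRoots d a).toFinset.card = d := by
      rw [Multiset.toFinset_card_of_nodup hnd, hprim.card_nthRoots, if_pos ⟨t₀, ht₀⟩]
    apply Polynomial.eq_zero_of_degree_lt_of_eval_finset_eq_zero (Polynomial.nthRoots d a).toFinset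
    · rw [hcard, ← Polynomial.mem_degreeLT]
      refine Submodule.sum_mem _ fun j _ => ?_
      rw [Polynomial.mem_degreeLT]
      refine (Polynomial.degree_C_mul_X_pow_le _ _).trans_lt ?_
      exact_mod_cast Nat.mod_lt _ hd
    · intro t ht
      have ht' : t ^ d = a := by simpa [Polynomial.mem_nthRoots hd] using ht
      rw [← hr t ht']
      simp only [R, Polynomial.eval_finsetSum,
        Polynomial.eval_mul, Polynomial.eval_C, Polynomial.eval_pow, Polynomial.eval_X]
      refine Finset.sum_congr rfl fun j _ => ?_
      conv_rhs => rw [← Nat.div_add_mod j d, pow_add, pow_mul, ht']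
      conv_lhs => rw [← Nat.div_add_mod j d]
      simp only [Nat.div_add_mod]
      ring
  have := congrArg (Polynomial.eval 1) hR
  simpa [R, Polynomial.eval_finsetSum] using this

/-- let `ρ : GL_n(ℂ) → GL_N(ℂ)` be a homomorphism which is a morphism of
varieties (entries of `ρ(g)` are fixed polynomials in the entries of `g` and `det(g)⁻¹`)
and under which the central `ℂˣ` acts with positive weights. Let `w₀ ≠ 0` have Zariski
closed `SL_n(ℂ)`-orbit. Then every point `k` of `closure(ρ(GL_n(ℂ))·w₀) \ ρ(GL_n(ℂ))·w₀`
is `SL_n(ℂ)`-unstable: `0` lies in the Zariski closure of `ρ(SL_n(ℂ))·k`. -/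
theorem stmt_9 {n N : ℕ} (hn : 1 ≤ n) (hN : 1 ≤ N)
    (ρ : Matrix.GeneralLinearGroup (Fin n) ℂ →* Matrix.GeneralLinearGroup (Fin N) ℂ)
    (P : Fin N → Fin N → MvPolynomial ((Fin n × Fin n) ⊕ Unit) ℂ)
    (hpoly : ∀ (g : Matrix.GeneralLinearGroup (Fin n) ℂ) (i j : Fin N),
      (↑(ρ g) : Matrix (Fin N) (Fin N) ℂ) i j =
        MvPolynomial.eval
          (Sum.elim (fun p : Fin n × Fin n => (↑g : Matrix (Fin n) (Fin n) ℂ) p.1 p.2)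
            (fun _ => ((↑g : Matrix (Fin n) (Fin n) ℂ).det)⁻¹)) (P i j))
    (w : Fin N → ℕ) (hw : ∀ i, 0 < w i)
    (hcentral : ∀ (z : ℂˣ) (g : Matrix.GeneralLinearGroup (Fin n) ℂ),
      (↑g : Matrix (Fin n) (Fin n) ℂ) = (z : ℂ) • (1 : Matrix (Fin n) (Fin n) ℂ) →
      (↑(ρ g) : Matrix (Fin N) (Fin N) ℂ) = Matrix.diagonal fun i => (z : ℂ) ^ w i)
    (w₀ : Fin N → ℂ) (hw₀ : w₀ ≠ 0)
    (hclosed : IsZariskiClosed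
      {x | ∃ g : Matrix.GeneralLinearGroup (Fin n) ℂ,
        (↑g : Matrix (Fin n) (Fin n) ℂ).det = 1 ∧
          x = (↑(ρ g) : Matrix (Fin N) (Fin N) ℂ).mulVec w₀})
    (k : Fin N → ℂ)
    -- `k` lies in the Zariski closure of the `GL_n(ℂ)`-orbit of `w₀` …
    (hk : ∀ C : Set (Fin N → ℂ), IsZariskiClosed C →
      {x | ∃ g : Matrix.GeneralLinearGroup (Fin n) ℂ,
        x = (↑(ρ g) : Matrix (Fin N) (Fin N) ℂ).mulVec w₀} ⊆ C → k ∈ C)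
    -- … but not in the orbit itself.
    (hk' : k ∉ {x | ∃ g : Matrix.GeneralLinearGroup (Fin n) ℂ,
      x = (↑(ρ g) : Matrix (Fin N) (Fin N) ℂ).mulVec w₀}) :
    ∀ C : Set (Fin N → ℂ), IsZariskiClosed C →
      {x | ∃ g : Matrix.GeneralLinearGroup (Fin n) ℂ,
        (↑g : Matrix (Fin n) (Fin n) ℂ).det = 1 ∧
          x = (↑(ρ g) : Matrix (Fin N) (Fin N) ℂ).mulVec k} ⊆ C →
      (0 : Fin N → ℂ) ∈ C := by
  classical
  -- notation
  have hcomm : ∀ (z : ℂˣ) (x : Fin N → ℂ), ∀ g : Matrix.GeneralLinearGroup (Fin n) ℂ,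
      (fun i => (z : ℂ) ^ w i * ((ρ g : Matrix (Fin N) (Fin N) ℂ).mulVec x) i) =
      (ρ g : Matrix (Fin N) (Fin N) ℂ).mulVec (fun i => (z : ℂ) ^ w i * x i) := by
    intro z x g
    let Z : Matrix.GeneralLinearGroup (Fin n) ℂ :=
      Matrix.GeneralLinearGroup.scalar (Fin n) z
    have hZ : (Z : Matrix (Fin n) (Fin n) ℂ) = (z : ℂ) • (1 : Matrix (Fin n) (Fin n) ℂ) := by
      ext i j
      simp [Z, Matrix.diagonal_apply, Matrix.one_apply]
    have hZg : Z * g = g * Z := by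
      apply Units.ext
      simp [hZ]
    have hρZ := hcentral z Z hZ
    have e : ∀ y : Fin N → ℂ, (fun i => (z : ℂ) ^ w i * y i) =
        (ρ Z : Matrix (Fin N) (Fin N) ℂ).mulVec y := by
      intro y; ext i; rw [hρZ, Matrix.mulVec_diagonal]
    rw [e, e, Matrix.mulVec_mulVec, Matrix.mulVec_mulVec, ← Units.val_mul, ← Units.val_mul,
      ← map_mul, ← map_mul, hZg]
  have hscal : ∀ (z : ℂˣ), ∃ Z : Matrix.GeneralLinearGroup (Fin n) ℂ,
      (Z : Matrix (Fin n) (Fin n) ℂ) = (z : ℂ) • (1 : Matrix (Fin n) (Fin n) ℂ) ∧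
      ∀ y : Fin N → ℂ, (fun i => (z : ℂ) ^ w i * y i) =
        (ρ Z : Matrix (Fin N) (Fin N) ℂ).mulVec y := by
    intro z
    have hZ : ((Matrix.GeneralLinearGroup.scalar (Fin n) z : Matrix.GeneralLinearGroup (Fin n) ℂ) :
        Matrix (Fin n) (Fin n) ℂ) = (z : ℂ) • (1 : Matrix (Fin n) (Fin n) ℂ) := by
      ext i j
      simp [Matrix.diagonal_apply, Matrix.one_apply]
    refine ⟨_, hZ, ?_⟩
    intro y; ext i; rw [hcentral z _ hZ, Matrix.mulVec_diagonal]
  -- decomposition of GL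
  have hdecomp : ∀ g : Matrix.GeneralLinearGroup (Fin n) ℂ, ∃ (z : ℂˣ)
      (s : Matrix.GeneralLinearGroup (Fin n) ℂ), (s : Matrix (Fin n) (Fin n) ℂ).det = 1 ∧
      (ρ g : Matrix (Fin N) (Fin N) ℂ).mulVec w₀ =
        fun i => (z : ℂ) ^ w i * ((ρ s : Matrix (Fin N) (Fin N) ℂ).mulVec w₀) i := by
    intro g
    have hgdet : (g : Matrix (Fin n) (Fin n) ℂ).det ≠ 0 :=
      ((Matrix.isUnit_iff_isUnit_det _).1 g.isUnit).ne_zero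
    obtain ⟨z, hz⟩ := IsAlgClosed.exists_pow_nat_eq (g : Matrix (Fin n) (Fin n) ℂ).det hn
    have hz0 : z ≠ 0 := by
      rintro rfl
      rw [zero_pow (by omega)] at hz
      exact hgdet hz.symm
    obtain ⟨Z, hZ, hZ'⟩ := hscal (Units.mk0 z hz0)
    refine ⟨Units.mk0 z hz0, Z⁻¹ * g, ?_, ?_⟩
    · have h1 : (Z : Matrix (Fin n) (Fin n) ℂ).det * ((Z⁻¹ * g : Matrix.GeneralLinearGroup (Fin n) ℂ) : Matrix (Fin n) (Fin n) ℂ).det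
          = (g : Matrix (Fin n) (Fin n) ℂ).det := by
        rw [← Matrix.det_mul, ← Units.val_mul, mul_inv_cancel_left]
      rw [hZ] at h1
      simp only [Units.val_mk0, Matrix.det_smul, Fintype.card_fin, Matrix.det_one, mul_one, hz] at h1
      exact mul_left_cancel₀ hgdet (by rw [h1, mul_one])
    · rw [hZ', Matrix.mulVec_mulVec, ← Units.val_mul, ← map_mul, mul_inv_cancel_left]
  -- closure as vanishing
  have hkpoly : ∀ p : MvPolynomial (Fin N) ℂ,
      (∀ g : Matrix.GeneralLinearGroup (Fin n) ℂ,
        MvPolynomial.eval ((ρ g : Matrix (Fin N) (Fin N) ℂ).mulVec w₀) p = 0) →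
      MvPolynomial.eval k p = 0 := by
    intro p hp
    have := hk {x | ∀ q ∈ ({p} : Set (MvPolynomial (Fin N) ℂ)), MvPolynomial.eval x q = 0}
      ⟨_, rfl⟩ (by
        rintro x ⟨g, rfl⟩ q rfl
        exact hp g)
    exact this p rfl
  rintro C ⟨S, rfl⟩ hC p hpS
  by_contra hp0
  -- Reynolds
  let τ : Matrix.specialUnitaryGroup (Fin n) ℂ →* Matrix.GeneralLinearGroup (Fin n) ℂ :=
    MonoidHom.toHomUnits (Submonoid.subtype _)
  have hτv : ∀ u, (τ u : Matrix (Fin n) (Fin n) ℂ) = u.1 := fun u => rfl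
  have hτdet : ∀ u, (τ u : Matrix (Fin n) (Fin n) ℂ).det = 1 := fun u => u.2.2
  obtain ⟨r, hr1, hr2, hr3⟩ := reynolds
    ((Units.coeHom (Matrix (Fin N) (Fin N) ℂ)).comp (ρ.comp τ)) (by
      intro i j
      simp only [MonoidHom.comp_apply, Units.coeHom_apply, hpoly, hτdet]
      have := cont_eval (X := Matrix.specialUnitaryGroup (Fin n) ℂ)
        (fun (a : (Fin n × Fin n) ⊕ Unit) (u : Matrix.specialUnitaryGroup (Fin n) ℂ) =>
          Sum.elim (fun p : Fin n × Fin n => u.1 p.1 p.2) (fun _ => (1 : ℂ)⁻¹) a) (by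
          rintro (a | a)
          · exact continuous_subtype_val.matrix_elem _ _
          · exact continuous_const) (P i j)
      exact this) p
  have hrk : MvPolynomial.eval k r = 0 := by
    apply hr1
    intro u
    exact hC ⟨τ u, hτdet u, rfl⟩ p hpS
  have hrSL : ∀ g : Matrix.GeneralLinearGroup (Fin n) ℂ, (g : Matrix (Fin n) (Fin n) ℂ).det = 1 →
      ∀ x, MvPolynomial.eval ((ρ g : Matrix (Fin N) (Fin N) ℂ).mulVec x) r =
        MvPolynomial.eval x r := by
    intro g hg x
    let F : Matrix (Fin n) (Fin n) ℂ → ℂ := fun M =>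
      MvPolynomial.eval (fun i => ∑ j, MvPolynomial.eval
        (Sum.elim (fun p : Fin n × Fin n => M p.1 p.2) (fun _ => (1 : ℂ))) (P i j) * x j) r
        - MvPolynomial.eval x r
    have hFg : ∀ g : Matrix.GeneralLinearGroup (Fin n) ℂ,
        (g : Matrix (Fin n) (Fin n) ℂ).det = 1 → F g =
        MvPolynomial.eval ((ρ g : Matrix (Fin N) (Fin N) ℂ).mulVec x) r -
          MvPolynomial.eval x r := by
      intro g hg
      simp only [F]
      congr 3
      ext i
      simp only [Matrix.mulVec, dotProduct, hpoly, hg, inv_one]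
    have := su_dense F (by
      intro M hM
      refine Differentiable.sub_const (diff_eval (fun i s => ∑ j, MvPolynomial.eval
        (Sum.elim (fun p : Fin n × Fin n => M s p.1 p.2) (fun _ => (1 : ℂ))) (P i j) * x j)
          ?_ r) _
      intro i
      refine Differentiable.fun_sum fun j _ => Differentiable.mul_const ?_ _
      refine diff_eval (fun (a : (Fin n × Fin n) ⊕ Unit) s =>
        Sum.elim (fun p : Fin n × Fin n => M s p.1 p.2) (fun _ => (1 : ℂ)) a) ?_ _
      rintro (a | a)
      · exact hM _ _
      · exact differentiable_const _) (by
      intro A hA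
      have h1 := hFg (τ ⟨A, hA⟩) (hτdet _)
      have h2 := hr3 ⟨A, hA⟩ x
      rw [hτv] at h1
      rw [h1, sub_eq_zero]
      exact h2) g hg
    rw [hFg g hg] at this
    exact sub_eq_zero.1 this
  -- weight components
  obtain ⟨D, q, hq⟩ := wt_expand w r
  have hqSL : ∀ j < D, ∀ g : Matrix.GeneralLinearGroup (Fin n) ℂ,
      (g : Matrix (Fin n) (Fin n) ℂ).det = 1 →
      ∀ x, MvPolynomial.eval ((ρ g : Matrix (Fin N) (Fin N) ℂ).mulVec x) (q j) =
        MvPolynomial.eval x (q j) := by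
    intro j hj g hg x
    refine coef_unique D (fun j => MvPolynomial.eval ((ρ g : Matrix (Fin N) (Fin N) ℂ).mulVec x) (q j))
      (fun j => MvPolynomial.eval x (q j)) ?_ j hj
    intro z hz
    simp only [← hq]
    have := hcomm (Units.mk0 z hz) x g
    rw [Units.val_mk0] at this
    rw [this, hrSL g hg]
  have hqhom : ∀ j < D, ∀ (z : ℂ) (x : Fin N → ℂ),
      MvPolynomial.eval (fun i => z ^ w i * x i) (q j) = z ^ j * MvPolynomial.eval x (q j) := by
    intro j hj z x
    refine coef_unique D (fun j => MvPolynomial.eval (fun i => z ^ w i * x i) (q j))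
      (fun j => z ^ j * MvPolynomial.eval x (q j)) ?_ j hj
    intro y hy
    simp only [← hq]
    have := hq x (y * z)
    simp only [mul_pow, mul_assoc] at this
    exact this
  obtain ⟨d, hdD, hd0, hdk⟩ : ∃ d < D, 0 < d ∧ MvPolynomial.eval k (q d) ≠ 0 := by
    by_contra hcon
    push Not at hcon
    have h1 := hq k 1
    have h0 := hq k 0
    have e0 : (fun i => (0 : ℂ) ^ w i * k i) = 0 := by
      ext i; simp [(hw i).ne']
    simp only [one_pow, one_mul] at h1
    rw [e0, hr2] at h0
    apply hp0
    rw [h0, ← hrk, h1]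
    refine Finset.sum_congr rfl fun j hj => ?_
    rcases Nat.eq_zero_or_pos j with rfl | hj0
    · simp
    · rw [hcon j (Finset.mem_range.1 hj) hj0]; simp
  set f := q d with hf
  set c := MvPolynomial.eval k f with hc
  have hforb : ∀ (z : ℂ) (s : Matrix.GeneralLinearGroup (Fin n) ℂ),
      (s : Matrix (Fin n) (Fin n) ℂ).det = 1 →
      MvPolynomial.eval (fun i => z ^ w i * ((ρ s : Matrix (Fin N) (Fin N) ℂ).mulVec w₀) i) f =
        z ^ d * MvPolynomial.eval w₀ f := by
    intro z s hs
    rw [hqhom d hdD, hqSL d hdD s hs]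
  have hfw : MvPolynomial.eval w₀ f ≠ 0 := by
    intro h
    apply hdk
    apply hkpoly
    intro g
    obtain ⟨z, s, hs, e⟩ := hdecomp g
    rw [e, hforb _ _ hs, h, mul_zero]
  -- the closed set
  obtain ⟨S', hS'⟩ := hclosed
  let b : ℂ := c / MvPolynomial.eval w₀ f
  have hb : b ≠ 0 := div_ne_zero hdk hfw
  have hchoose : ∀ ζ : ℂ, ∃ m : MvPolynomial (Fin N) ℂ, ζ ^ d = b →
      (m ∈ S' ∧ MvPolynomial.eval (fun i => ζ⁻¹ ^ w i * k i) m ≠ 0) := by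
    intro ζ
    by_cases hζ : ζ ^ d = b
    swap
    · exact ⟨0, fun h => absurd h hζ⟩
    have hζ0 : ζ ≠ 0 := by
      rintro rfl
      rw [zero_pow hd0.ne'] at hζ
      exact hb hζ.symm
    have hnot : (fun i => ζ⁻¹ ^ w i * k i) ∉ {x | ∃ g : Matrix.GeneralLinearGroup (Fin n) ℂ,
        (↑g : Matrix (Fin n) (Fin n) ℂ).det = 1 ∧
          x = (↑(ρ g) : Matrix (Fin N) (Fin N) ℂ).mulVec w₀} := by
      rintro ⟨s, hs, e⟩
      apply hk'
      obtain ⟨Z, hZ, hZ'⟩ := hscal (Units.mk0 ζ hζ0)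
      refine ⟨Z * s, ?_⟩
      rw [map_mul, Units.val_mul, ← Matrix.mulVec_mulVec, ← e, ← hZ']
      ext i
      rw [Units.val_mk0, ← mul_assoc, ← mul_pow, mul_inv_cancel₀ hζ0, one_pow, one_mul]
    rw [hS'] at hnot
    simp only [Set.mem_ofPred_eq, not_forall] at hnot
    obtain ⟨m, hm, hm'⟩ := hnot
    exact ⟨m, fun _ => ⟨hm, hm'⟩⟩
  choose m hm using hchoose
  let roots : Finset ℂ := (Polynomial.nthRoots d b).toFinset
  have hroots : ∀ ζ, ζ ∈ roots ↔ ζ ^ d = b := by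
    intro ζ; simp [roots, Polynomial.mem_nthRoots hd0]
  let Pp : MvPolynomial (Fin N) ℂ := ∏ ζ ∈ roots,
    MvPolynomial.bind₁ (fun i => MvPolynomial.C (ζ⁻¹ ^ w i) * MvPolynomial.X i) (m ζ)
  have hPp : ∀ x, MvPolynomial.eval x Pp =
      ∏ ζ ∈ roots, MvPolynomial.eval (fun i => ζ⁻¹ ^ w i * x i) (m ζ) := by
    intro x
    simp only [Pp, map_prod]
    refine Finset.prod_congr rfl fun ζ _ => ?_
    rw [← MvPolynomial.coe_aeval_eq_eval, RingHom.coe_coe, MvPolynomial.aeval_bind₁]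
    simp [MvPolynomial.coe_aeval_eq_eval]
  have hPk : MvPolynomial.eval k Pp ≠ 0 := by
    rw [hPp]
    exact Finset.prod_ne_zero_iff.2 fun ζ hζ => (hm ζ ((hroots ζ).1 hζ)).2
  have hPA : ∀ ζ : ℂ, ζ ^ d = b → ∀ s : Matrix.GeneralLinearGroup (Fin n) ℂ,
      (s : Matrix (Fin n) (Fin n) ℂ).det = 1 →
      MvPolynomial.eval (fun i => ζ ^ w i * ((ρ s : Matrix (Fin N) (Fin N) ℂ).mulVec w₀) i) Pp = 0 := by
    intro ζ hζ s hs
    have hζ0 : ζ ≠ 0 := by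
      rintro rfl
      rw [zero_pow hd0.ne'] at hζ
      exact hb hζ.symm
    rw [hPp]
    refine Finset.prod_eq_zero ((hroots ζ).2 hζ) ?_
    have hmem : (ρ s : Matrix (Fin N) (Fin N) ℂ).mulVec w₀ ∈
        {x | ∀ p ∈ S', MvPolynomial.eval x p = 0} := by
      rw [← hS']; exact ⟨s, hs, rfl⟩
    rw [← hmem (m ζ) (hm ζ hζ).1]
    congr 2
    ext i
    rw [← mul_assoc, ← mul_pow, inv_mul_cancel₀ hζ0, one_pow, one_mul]
  obtain ⟨E, y, hy⟩ := wt_expand w Pp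
  let R : MvPolynomial (Fin N) ℂ := ∑ j ∈ Finset.range E,
    MvPolynomial.C (c ^ (j / d)) * f ^ (E - j / d) * y j
  have hRk : MvPolynomial.eval k R = 0 := by
    apply hkpoly
    intro g
    obtain ⟨z, s, hs, e⟩ := hdecomp g
    rw [e]
    set x : Fin N → ℂ := fun i => (z : ℂ) ^ w i * ((ρ s : Matrix (Fin N) (Fin N) ℂ).mulVec w₀) i
      with hx
    have hfx : MvPolynomial.eval x f = (z : ℂ) ^ d * MvPolynomial.eval w₀ f := hforb _ _ hs
    have hfx0 : MvPolynomial.eval x f ≠ 0 := by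
      rw [hfx]; exact mul_ne_zero (pow_ne_zero _ z.ne_zero) hfw
    have key := root_lemma d hd0 (c / MvPolynomial.eval x f) (div_ne_zero hdk hfx0) E
      (fun j => MvPolynomial.eval x (y j)) (by
        intro t ht
        rw [← hy, ← hPA (t * z) ?_ s hs]
        · simp only [hx, mul_pow, mul_assoc]
        · rw [mul_pow, ht, hfx]
          have := z.ne_zero
          simp only [b]
          field_simp)
    have : MvPolynomial.eval x R = (MvPolynomial.eval x f) ^ E * 0 := by
      rw [← key, Finset.mul_sum]
      simp only [R, map_sum, map_mul, map_pow, MvPolynomial.eval_C]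
      refine Finset.sum_congr rfl fun j hj => ?_
      have hjE : j / d ≤ E := (Nat.div_le_self _ _).trans (Finset.mem_range.1 hj).le
      rw [← Nat.sub_add_cancel hjE, pow_add, div_pow]
      simp only [Nat.add_sub_cancel]
      field_simp
    rw [this, mul_zero]
  apply hPk
  have h1 := hy k 1
  simp only [one_pow, one_mul] at h1
  rw [h1]
  have h2 : MvPolynomial.eval k R = c ^ E * ∑ j ∈ Finset.range E, MvPolynomial.eval k (y j) := by
    rw [Finset.mul_sum]
    simp only [R, map_sum, map_mul, map_pow, MvPolynomial.eval_C, ← hc]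
    refine Finset.sum_congr rfl fun j hj => ?_
    have hjE : j / d ≤ E := (Nat.div_le_self _ _).trans (Finset.mem_range.1 hj).le
    rw [← pow_add, Nat.add_sub_cancel' hjE]
  rw [hRk] at h2
  exact (mul_eq_zero.1 h2.symm).resolve_left (pow_ne_zero _ hdk)
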